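/- Let n ≥ 1, let A ∈ ℂ^{n×n} be positive-imaginary with canonical phases φ₁(A) ≥ ⋯ ≥ φₙ(A) ≥ 0, let 0 ≤ r ≤ n, and let E ∈ ℂ^{n×n} be any sectorial matrix with prank(E) ≤ r such that E⁻¹AE⁻¹ is positive-imaginary. Then for every m ∈ {1,…,n}, the sum of the m largest canonical phases of E⁻¹AE⁻¹ is at least Σ_{k=r+1}^{min(n,r+m)} φ_k(A). -/

import Mathlib

noncomputable section

open Matrix
open scoped Classical ComplexOrder

namespace LowPrank

variable {n : ℕ}

/-- A matrix is sectorial if its numerical range does not contain `0`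
(`star x ⬝ᵥ x = 1` encodes `‖x‖₂ = 1`). -/
def IsSectorial (A : Matrix (Fin n) (Fin n) ℂ) : Prop :=
  ∀ x : Fin n → ℂ, star x ⬝ᵥ x = 1 → star x ⬝ᵥ A.mulVec x ≠ 0

/-- The diagonal unitary matrix `diag (e^{iφ₁}, …, e^{iφₙ})`. -/
def phaseDiag (φ : Fin n → ℝ) : Matrix (Fin n) (Fin n) ℂ :=
  Matrix.diagonal fun k => Complex.exp (Complex.I * (φ k : ℂ))

/-- `A = Tᴴ diag (e^{iφ₁}, …, e^{iφₙ}) T` with `T` invertible. -/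
def IsSectorialDecomp (A T : Matrix (Fin n) (Fin n) ℂ) (φ : Fin n → ℝ) : Prop :=
  IsUnit T ∧ A = Tᴴ * phaseDiag φ * T

/-- `φ` is the (sorted, normalized) vector of canonical phases of `A`:
nonincreasing, spread `< π`, midpoint of the range in `(-π, π]`, and realizing a
sectorial decomposition of `A`. -/
def IsCanonicalPhases (A : Matrix (Fin n) (Fin n) ℂ) (φ : Fin n → ℝ) : Prop :=
  Antitone φ ∧ (∀ i j, φ i - φ j < Real.pi) ∧
    (-Real.pi < ((⨆ i, φ i) + ⨅ i, φ i) / 2) ∧ (((⨆ i, φ i) + ⨅ i, φ i) / 2 ≤ Real.pi) ∧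
    ∃ T, IsSectorialDecomp A T φ

/-- The canonical phases `φ₁(A) ≥ ⋯ ≥ φₙ(A)` of a sectorial matrix
(`phases A k` is the `(k+1)`-st largest canonical phase). -/
noncomputable def phases (A : Matrix (Fin n) (Fin n) ℂ) : Fin n → ℝ :=
  if h : ∃ φ, IsCanonicalPhases A φ then h.choose else 0

/-- The phase-rank: the number of nonzero canonical phases. -/
noncomputable def prank (A : Matrix (Fin n) (Fin n) ℂ) : ℕ :=
  {k : Fin n | phases A k ≠ 0}.ncard

/-- Positive-imaginary: sectorial with all canonical phases in `[0, π)`. -/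
def PositiveImaginary (A : Matrix (Fin n) (Fin n) ℂ) : Prop :=
  IsSectorial A ∧ ∀ k, phases A k ∈ Set.Ico 0 Real.pi

/-- Symmetric gauge function. -/
structure IsSymmetricGauge (Φ : (Fin n → ℝ) → ℝ) : Prop where
  pos : ∀ x, x ≠ 0 → 0 < Φ x
  smul : ∀ (ρ : ℝ) (x), Φ (ρ • x) = |ρ| * Φ x
  subadd : ∀ x y, Φ (x + y) ≤ Φ x + Φ y
  perm : ∀ (σ : Equiv.Perm (Fin n)) (x), Φ (x ∘ σ) = Φ x
  abs : ∀ x, Φ (fun k => |x k|) = Φ x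

/-- The set `S_p(A, r)` of `r`-half-truncations of `A`. -/
def Sp (A : Matrix (Fin n) (Fin n) ℂ) (r : ℕ) : Set (Matrix (Fin n) (Fin n) ℂ) :=
  {E | ∃ T, IsSectorialDecomp A T (phases A) ∧
    E = Tᴴ * Matrix.diagonal (fun k : Fin n =>
      if (k : ℕ) < r then Complex.exp (Complex.I * ((phases A k / 2 : ℝ) : ℂ)) else 1) * T}


/-- The quadratic form of a matrix. -/
def qf (A : Matrix (Fin n) (Fin n) ℂ) (x : Fin n → ℂ) : ℂ := star x ⬝ᵥ A.mulVec x

lemma qf_comb (A : Matrix (Fin n) (Fin n) ℂ) (x y : Fin n → ℂ) (a b : ℂ) :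
    qf A (a • x + b • y) = star a * a * qf A x + star b * b * qf A y +
      (star a * b * (star x ⬝ᵥ A.mulVec y) + a * star b * (star y ⬝ᵥ A.mulVec x)) := by
  simp only [qf, star_add, star_smul, mulVec_add, mulVec_smul, dotProduct_add, add_dotProduct,
    smul_dotProduct, dotProduct_smul, smul_eq_mul]
  ring

lemma qf_smul (A : Matrix (Fin n) (Fin n) ℂ) (x : Fin n → ℂ) (a : ℂ) :
    qf A (a • x) = star a * a * qf A x := by
  simp only [qf, star_smul, mulVec_smul, smul_dotProduct, dotProduct_smul, smul_eq_mul]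
  ring

lemma normSq_form (x : Fin n → ℂ) : star x ⬝ᵥ x = ((∑ i, ‖x i‖ ^ 2 : ℝ) : ℂ) := by
  simp only [dotProduct, Pi.star_apply, RCLike.star_def, Complex.conj_mul']
  push_cast
  rfl

lemma normSq_pos {x : Fin n → ℂ} (hx : x ≠ 0) : 0 < ∑ i, ‖x i‖ ^ 2 := by
  obtain ⟨i, hi⟩ := Function.ne_iff.mp hx
  exact Finset.sum_pos' (fun _ _ => by positivity)
    ⟨i, Finset.mem_univ _, by have : 0 < ‖x i‖ := norm_pos_iff.mpr hi
                              positivity⟩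

lemma exists_unit (x : Fin n → ℂ) (hx : x ≠ 0) :
    ∃ t : ℝ, 0 < t ∧ star ((t : ℂ) • x) ⬝ᵥ ((t : ℂ) • x) = 1 := by
  have hp := normSq_pos hx
  refine ⟨(Real.sqrt (∑ i, ‖x i‖ ^ 2))⁻¹, by positivity, ?_⟩
  simp only [star_smul, smul_dotProduct, dotProduct_smul, smul_eq_mul, normSq_form,
    RCLike.star_def, Complex.conj_ofReal]
  norm_cast
  have h := Real.mul_self_sqrt hp.le
  have h2 := (Real.sqrt_pos.mpr hp).ne'
  generalize Real.sqrt (∑ i, ‖x i‖ ^ 2) = s at *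
  rw [← h]
  field_simp

lemma IsSectorial.qf_ne {A : Matrix (Fin n) (Fin n) ℂ} (hA : IsSectorial A) {x : Fin n → ℂ}
    (hx : x ≠ 0) : qf A x ≠ 0 := by
  obtain ⟨t, ht, h⟩ := exists_unit x hx
  intro h0
  apply hA _ h
  change qf A _ = 0
  rw [qf_smul, h0, mul_zero]

lemma exists_phase (p q w : ℂ) (hw : w ≠ 0) :
    ∃ u : ℂ, star u * u = 1 ∧ ∃ s : ℝ, 0 ≤ s ∧ u * p + star u * q = s * w := by
  have key : ∃ u : ℂ, star u * u = 1 ∧ (u * (p / w) + star u * (q / w)).im = 0 := by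
    set g : ℂ := p / w - star (q / w) with hg
    have e : ∀ u : ℂ, (u * (p / w) + star u * (q / w)).im = (u * g).im := by
      intro u
      rw [hg]
      simp only [Complex.add_im, Complex.mul_im, Complex.sub_re, Complex.sub_im, RCLike.star_def,
        Complex.conj_re, Complex.conj_im]
      ring
    by_cases h : g = 0
    · exact ⟨1, by simp, by rw [e, h]; simp⟩
    · have hn : (‖g‖ : ℂ) ≠ 0 := by simpa using h
      refine ⟨star g / ‖g‖, ?_, ?_⟩
      · simp only [RCLike.star_def, map_div₀, Complex.conj_conj, Complex.conj_ofReal]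
        rw [div_mul_div_comm, Complex.mul_conj']
        field_simp
      · rw [e, div_mul_eq_mul_div, RCLike.star_def, Complex.conj_mul', ]
        norm_cast
  obtain ⟨u, hu, him⟩ := key
  set v := u * (p / w) + star u * (q / w) with hv
  have hvr : v = (v.re : ℂ) := by
    apply Complex.ext <;> simp [him]
  have hvw : u * p + star u * q = v * w := by
    rw [hv]; field_simp
  rcases le_total 0 v.re with h | h
  · exact ⟨u, hu, v.re, h, by rw [hvw, ← hvr]⟩
  · refine ⟨-u, by simpa using hu, -v.re, by linarith, ?_⟩
    push_cast
    rw [← hvr, star_neg]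
    linear_combination - hvw

lemma IsSectorial.exists_add {A : Matrix (Fin n) (Fin n) ℂ} (hA : IsSectorial A)
    {x y : Fin n → ℂ} (hx : x ≠ 0) :
    ∃ z, z ≠ 0 ∧ qf A z = qf A x + qf A y := by
  have hw : qf A x + qf A y ≠ 0 := by
    intro h0
    obtain ⟨u, hu, s, hs, h⟩ := exists_phase (star x ⬝ᵥ A.mulVec y) (star y ⬝ᵥ A.mulVec x)
      (qf A x) (hA.qf_ne hx)
    set α : ℝ := (-s + Real.sqrt (s ^ 2 + 4)) / 2 with hα
    have hsq : Real.sqrt (s ^ 2 + 4) ^ 2 = s ^ 2 + 4 := Real.sq_sqrt (by positivity)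
    have e : α ^ 2 + s * α - 1 = 0 := by rw [hα]; nlinarith
    have eC : (α : ℂ) ^ 2 + s * α - 1 = 0 := by exact_mod_cast e
    have hα0 : α ≠ 0 := by rintro h; rw [h] at e; norm_num at e
    have hq : qf A ((α : ℂ) • x + u • y) = 0 := by
      rw [qf_comb]
      simp only [RCLike.star_def, Complex.conj_ofReal] at *
      linear_combination qf A y * hu + α * h + h0 + qf A x * eC
    have hz : (α : ℂ) • x + u • y = 0 := by
      by_contra hz
      exact hA.qf_ne hz hq
    have hyx : (α : ℂ) • x = (-u) • y := by
      rw [neg_smul]; exact eq_neg_of_add_eq_zero_left hz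
    have h2 : qf A ((α : ℂ) • x) = qf A ((-u) • y) := by rw [hyx]
    rw [qf_smul, qf_smul] at h2
    simp only [RCLike.star_def, Complex.conj_ofReal, map_neg] at *
    have h3 : ((α : ℂ) ^ 2 + 1) * qf A x = 0 := by
      linear_combination h2 + qf A y * hu + h0
    rcases mul_eq_zero.mp h3 with h4 | h4
    · have : α ^ 2 + 1 = 0 := by exact_mod_cast h4
      nlinarith [sq_nonneg α]
    · exact hA.qf_ne hx h4
  obtain ⟨u, hu, s, hs, h⟩ := exists_phase (star x ⬝ᵥ A.mulVec y) (star y ⬝ᵥ A.mulVec x) _ hw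
  set t : ℝ := Real.sqrt (1 + s)⁻¹ with ht
  have ht2 : t ^ 2 * (1 + s) = 1 := by
    rw [ht, Real.sq_sqrt (by positivity)]
    field_simp
  have htC : (t : ℂ) ^ 2 * (1 + s) = 1 := by exact_mod_cast ht2
  have hq : qf A ((t : ℂ) • x + (t * u : ℂ) • y) = qf A x + qf A y := by
    rw [qf_comb]
    simp only [RCLike.star_def, Complex.conj_ofReal, map_mul] at *
    linear_combination t ^ 2 * qf A y * hu + t ^ 2 * h + (qf A x + qf A y) * htC
  refine ⟨_, ?_, hq⟩
  intro hz
  rw [hz] at hq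
  apply hw
  rw [← hq]; simp [qf]

lemma IsSectorial.zero_notMem {A : Matrix (Fin n) (Fin n) ℂ} (hA : IsSectorial A) :
    (0 : ℂ) ∉ convexHull ℝ {w | ∃ x, star x ⬝ᵥ x = 1 ∧ w = qf A x} := by
  have hc : Convex ℝ {w | ∃ x : Fin n → ℂ, x ≠ 0 ∧ w = qf A x} := by
    rw [convex_iff_forall_pos]
    rintro _ ⟨x, hx, rfl⟩ _ ⟨y, hy, rfl⟩ a b ha hb -
    have sc : ∀ (a : ℝ), 0 < a → ∀ x : Fin n → ℂ,
        a • qf A x = qf A (((Real.sqrt a : ℝ) : ℂ) • x) := by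
      intro a ha x
      rw [qf_smul]
      simp only [RCLike.star_def, Complex.conj_ofReal, Complex.real_smul]
      rw [← Complex.ofReal_mul, Real.mul_self_sqrt ha.le]
    rw [sc a ha, sc b hb]
    have nz : ∀ (a : ℝ), 0 < a → ∀ x : Fin n → ℂ, x ≠ 0 → ((Real.sqrt a : ℝ) : ℂ) • x ≠ 0 := by
      intro a ha x hx
      apply smul_ne_zero _ hx
      exact_mod_cast (Real.sqrt_pos.mpr ha).ne'
    obtain ⟨z, hz, h⟩ := hA.exists_add (y := ((Real.sqrt b : ℝ) : ℂ) • y) (nz a ha x hx)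
    exact ⟨z, hz, h.symm⟩
  intro h
  have hsub : {w | ∃ x : Fin n → ℂ, star x ⬝ᵥ x = 1 ∧ w = qf A x} ⊆
      {w | ∃ x : Fin n → ℂ, x ≠ 0 ∧ w = qf A x} := by
    rintro _ ⟨x, hx, rfl⟩
    refine ⟨x, ?_, rfl⟩
    rintro rfl
    simp at hx
  obtain ⟨x, hx, h0⟩ := convexHull_min hsub hc h
  exact hA.qf_ne hx h0.symm

lemma IsSectorial.exists_lower {A : Matrix (Fin n) (Fin n) ℂ} (hA : IsSectorial A) :
    ∃ δ : ℝ, 0 < δ ∧ ∀ x : Fin n → ℂ, star x ⬝ᵥ x = 1 → δ ≤ ‖qf A x‖ := by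
  have hcl : IsClosed {x : Fin n → ℂ | star x ⬝ᵥ x = 1} := by
    apply isClosed_eq _ continuous_const
    unfold dotProduct
    fun_prop
  have hcomp : IsCompact {x : Fin n → ℂ | star x ⬝ᵥ x = 1} := by
    apply Metric.isCompact_of_isClosed_isBounded hcl
    rw [isBounded_iff_forall_norm_le]
    refine ⟨1, fun x hx => ?_⟩
    rw [pi_norm_le_iff_of_nonneg zero_le_one]
    intro i
    have hx' : ∑ i, ‖x i‖ ^ 2 = 1 := by
      have : star x ⬝ᵥ x = 1 := hx
      rw [normSq_form] at this
      exact_mod_cast this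
    have : ‖x i‖ ^ 2 ≤ ∑ i, ‖x i‖ ^ 2 :=
      Finset.single_le_sum (f := fun i => ‖x i‖ ^ 2) (fun _ _ => by positivity) (Finset.mem_univ i)
    nlinarith [norm_nonneg (x i)]
  by_cases hne : {x : Fin n → ℂ | star x ⬝ᵥ x = 1}.Nonempty
  · have hcont : Continuous fun x : Fin n → ℂ => ‖qf A x‖ := by
      unfold qf dotProduct mulVec dotProduct
      fun_prop
    obtain ⟨x, hx, hmin⟩ := hcomp.exists_isMinOn hne hcont.continuousOn
    exact ⟨‖qf A x‖, norm_pos_iff.mpr (hA x hx), fun y hy => hmin hy⟩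
  · exact ⟨1, one_pos, fun x hx => absurd ⟨x, hx⟩ hne⟩

open scoped Pointwise in
/-- A sectorial matrix can be rotated to have positive definite real part. -/
lemma IsSectorial.exists_rotation {A : Matrix (Fin n) (Fin n) ℂ} (hA : IsSectorial A) :
    ∃ c : ℂ, (∀ x : Fin n → ℂ, x ≠ 0 → 0 < (c * qf A x).re) := by
  obtain ⟨δ, hδ, hlow⟩ := hA.exists_lower
  have hdisj : Disjoint (Metric.ball (0 : ℂ) δ)
      (convexHull ℝ {w | ∃ x, star x ⬝ᵥ x = 1 ∧ w = qf A x}) := by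
    rw [Set.disjoint_left]
    intro c hc hcW
    have hq : ∀ x : Fin n → ℂ, star x ⬝ᵥ x = 1 → qf (A - c • 1) x = qf A x - c := by
      intro x hx
      simp only [qf, sub_mulVec, dotProduct_sub, smul_mulVec, one_mulVec, dotProduct_smul, hx]
      simp
    have hs : IsSectorial (A - c • 1) := by
      intro x hx h0
      have h1 : qf (A - c • 1) x = 0 := h0
      rw [hq x hx, sub_eq_zero] at h1
      have := hlow x hx
      rw [h1] at this
      simp at hc
      linarith
    apply hs.zero_notMem
    have himg : {w | ∃ x, star x ⬝ᵥ x = 1 ∧ w = qf (A - c • 1) x} =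
        (-c) +ᵥ {w | ∃ x, star x ⬝ᵥ x = 1 ∧ w = qf A x} := by
      ext w
      simp only [Set.mem_ofPred_eq, Set.mem_vadd_set]
      constructor
      · rintro ⟨x, hx, rfl⟩
        exact ⟨_, ⟨x, hx, rfl⟩, by rw [hq x hx, vadd_eq_add]; ring⟩
      · rintro ⟨_, ⟨x, hx, rfl⟩, rfl⟩
        exact ⟨x, hx, by rw [hq x hx, vadd_eq_add]; ring⟩
    rw [himg, convexHull_vadd]
    exact ⟨c, hcW, by simp⟩
  obtain ⟨f, u, hf1, hf2⟩ := geometric_hahn_banach_open (convex_ball _ _) Metric.isOpen_ball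
    (convex_convexHull ℝ _) hdisj
  have hu : 0 < u := by simpa using hf1 0 (by simpa using hδ)
  have hf : ∀ w : ℂ, f w = ((f 1 - f Complex.I * Complex.I : ℂ) * w).re := by
    intro w
    have hw : w = w.re • (1 : ℂ) + w.im • Complex.I := by
      simp [Complex.re_add_im]
    conv_lhs => rw [hw, map_add, map_smul, map_smul]
    simp
    ring
  refine ⟨(f 1 - f Complex.I * Complex.I : ℂ), fun x hx => ?_⟩
  rw [← hf]
  obtain ⟨t, ht, h⟩ := exists_unit x hx
  have := hf2 _ (subset_convexHull ℝ _ ⟨_, h, rfl⟩)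
  rw [qf_smul] at this
  simp only [RCLike.star_def, Complex.conj_ofReal] at this
  rw [← Complex.ofReal_mul, ← Complex.real_smul, map_smul, smul_eq_mul] at this
  have h3 : 0 < t * t * f (qf A x) := by linarith
  exact pos_of_mul_pos_right h3 (by positivity)

lemma exists_canonical_of_diag (hn : 1 ≤ n) (A S : Matrix (Fin n) (Fin n) ℂ) (hS : IsUnit S)
    (ρ θ : Fin n → ℝ) (hρ : ∀ k, 0 < ρ k) (hθ : ∀ i j, θ i - θ j < Real.pi)
    (hA : A = Sᴴ * Matrix.diagonal (fun k => (ρ k : ℂ) * Complex.exp (Complex.I * (θ k : ℂ))) * S) :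
    ∃ φ, IsCanonicalPhases A φ := by
  set σ : Equiv.Perm (Fin n) := Tuple.sort (fun k => - θ k) with hσ
  have hanti : Antitone (θ ∘ σ) := by
    have h := Tuple.monotone_sort (fun k => - θ k)
    intro i j hij
    have := h hij
    simp only [Function.comp] at this ⊢
    linarith
  let i0 : Fin n := ⟨0, hn⟩
  let i1 : Fin n := ⟨n - 1, by omega⟩
  have : Nonempty (Fin n) := ⟨i0⟩
  obtain ⟨N, hN, -⟩ := existsUnique_add_zsmul_mem_Ioc Real.two_pi_pos
    ((θ (σ i0) + θ (σ i1)) / 2) (-Real.pi)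
  rw [zsmul_eq_mul] at hN
  set φ : Fin n → ℝ := fun k => θ (σ k) + N * (2 * Real.pi) with hφ
  have hφa : Antitone φ := fun i j hij => by
    have := hanti hij
    simp only [Function.comp] at this
    simp only [hφ]; linarith
  have hsup : (⨆ i, φ i) = φ i0 := by
    apply le_antisymm
    · exact ciSup_le fun i => hφa (Fin.mk_le_of_le_val (Nat.zero_le _))
    · exact le_ciSup (Set.finite_range φ).bddAbove i0
  have hinf : (⨅ i, φ i) = φ i1 := by
    apply le_antisymm
    · exact ciInf_le (Set.finite_range φ).bddBelow i1
    · exact le_ciInf fun i => hφa (by change i.1 ≤ n - 1; omega)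
  refine ⟨φ, hφa, ?_, ?_, ?_, ?_⟩
  · intro i j
    have := hθ (σ i) (σ j)
    simp only [hφ]; linarith
  · rw [hsup, hinf]
    have := hN.1
    simp only [hφ]; linarith
  · rw [hsup, hinf]
    have := hN.2
    simp only [hφ]; linarith
  · refine ⟨(Matrix.diagonal (fun k => ((Real.sqrt (ρ k) : ℝ) : ℂ)) * S).submatrix σ id, ?_, ?_⟩
    · have h1 : IsUnit (Matrix.diagonal (fun k => ((Real.sqrt (ρ k) : ℝ) : ℂ))) := by
        rw [Matrix.isUnit_diagonal, Pi.isUnit_iff]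
        intro k
        rw [isUnit_iff_ne_zero]
        exact_mod_cast (Real.sqrt_pos.mpr (hρ k)).ne'
      exact (Matrix.isUnit_submatrix_equiv (e₁ := σ) (e₂ := Equiv.refl _)).mpr (h1.mul hS)
    · rw [hA]
      ext i j
      rw [Matrix.mul_apply, Matrix.mul_apply]
      simp only [phaseDiag, Matrix.mul_diagonal, Matrix.conjTranspose_apply,
        Matrix.submatrix_apply, Matrix.diagonal_mul, id]
      rw [← Equiv.sum_comp σ]
      apply Finset.sum_congr rfl
      intro k _
      have e : Complex.exp (Complex.I * (φ k : ℂ)) = Complex.exp (Complex.I * (θ (σ k) : ℂ)) := by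
        rw [Complex.exp_eq_exp_iff_exists_int]
        refine ⟨N, ?_⟩
        simp only [hφ]
        push_cast
        ring
      have e2 : ((Real.sqrt (ρ (σ k)) : ℝ) : ℂ) * ((Real.sqrt (ρ (σ k)) : ℝ) : ℂ) = ρ (σ k) := by
        rw [← Complex.ofReal_mul, Real.mul_self_sqrt (hρ _).le]
      rw [e, ← e2]
      simp only [star_mul', RCLike.star_def, Complex.conj_ofReal]
      ring

open scoped MatrixOrder in
lemma exists_simdiag (M : Matrix (Fin n) (Fin n) ℂ)
    (hM : ∀ x : Fin n → ℂ, x ≠ 0 → 0 < (qf M x).re) :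
    ∃ (S : Matrix (Fin n) (Fin n) ℂ) (l : Fin n → ℝ), IsUnit S ∧
      M = Sᴴ * Matrix.diagonal (fun k => (1 + Complex.I * (l k : ℂ))) * S := by
  set H : Matrix (Fin n) (Fin n) ℂ := (2⁻¹ : ℂ) • (M + Mᴴ) with hH
  set K : Matrix (Fin n) (Fin n) ℂ := (-(Complex.I / 2) : ℂ) • (M - Mᴴ) with hK
  have hMHK : M = H + Complex.I • K := by
    rw [hH, hK, smul_smul]
    have : Complex.I * -(Complex.I / 2) = 2⁻¹ := by
      linear_combination (-(1/2) : ℂ) * Complex.I_mul_I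
    rw [this, ← smul_add]
    have : M + Mᴴ + (M - Mᴴ) = (2 : ℂ) • M := by rw [two_smul]; abel
    rw [this, smul_smul]
    norm_num
  have hHh : H.IsHermitian := by
    rw [Matrix.IsHermitian, hH, conjTranspose_smul, conjTranspose_add, conjTranspose_conjTranspose,
      add_comm Mᴴ]
    simp
  have hKh : K.IsHermitian := by
    rw [Matrix.IsHermitian, hK, conjTranspose_smul, conjTranspose_sub, conjTranspose_conjTranspose,
      ← neg_sub M, smul_neg, ← neg_smul]
    congr 1
    simp only [RCLike.star_def, map_neg, map_div₀, Complex.conj_I, map_ofNat]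
    ring
  have hconj : ∀ x : Fin n → ℂ, star x ⬝ᵥ Mᴴ.mulVec x = star (qf M x) := by
    intro x
    rw [qf, dotProduct_mulVec, ← star_mulVec, star_dotProduct, ← dotProduct_comm]
  have hHpd : H.PosDef := by
    refine .of_dotProduct_mulVec_pos hHh fun x hx => ?_
    have : star x ⬝ᵥ H.mulVec x = (((qf M x).re : ℝ) : ℂ) := by
      rw [hH, smul_mulVec, add_mulVec, dotProduct_smul, dotProduct_add, hconj]
      change 2⁻¹ * (qf M x + star (qf M x)) = _
      rw [RCLike.star_def, Complex.add_conj]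
      push_cast
      ring
    rw [this]
    exact_mod_cast hM x hx
  obtain ⟨P, hP, hHP⟩ := CStarAlgebra.isStrictlyPositive_iff_eq_star_mul_self.mp
    hHpd.isStrictlyPositive
  have hPd : IsUnit P.det := (Matrix.isUnit_iff_isUnit_det P).mp hP
  rw [star_eq_conjTranspose] at hHP
  set K' := (P⁻¹)ᴴ * K * P⁻¹ with hK'
  have hK'h : K'.IsHermitian := by
    rw [hK']
    exact Matrix.isHermitian_conjTranspose_mul_mul _ hKh
  have hsp := hK'h.spectral_theorem
  rw [Unitary.conjStarAlgAut_apply] at hsp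
  set U : Matrix (Fin n) (Fin n) ℂ := (hK'h.eigenvectorUnitary : Matrix (Fin n) (Fin n) ℂ) with hU
  have hUU : U * Uᴴ = 1 := by
    rw [← star_eq_conjTranspose]
    exact Unitary.coe_mul_star_self hK'h.eigenvectorUnitary
  have hUU' : Uᴴ * U = 1 := by
    rw [← star_eq_conjTranspose]
    exact Unitary.coe_star_mul_self hK'h.eigenvectorUnitary
  have hKK : K = Pᴴ * K' * P := by
    rw [hK', ← Matrix.mul_assoc, ← Matrix.mul_assoc, ← conjTranspose_mul,
      Matrix.nonsing_inv_mul _ hPd, Matrix.mul_assoc, Matrix.nonsing_inv_mul _ hPd]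
    simp
  refine ⟨Uᴴ * P, hK'h.eigenvalues, ?_, ?_⟩
  · exact (IsUnit.of_mul_eq_one _ hUU').mul hP
  · have hd : Matrix.diagonal (fun k => (1 + Complex.I * (hK'h.eigenvalues k : ℂ))) =
        1 + Complex.I • Matrix.diagonal (RCLike.ofReal ∘ hK'h.eigenvalues : Fin n → ℂ) := by
      ext i j
      by_cases h : i = j
      · subst h; simp
      · simp [h]
    rw [hd, conjTranspose_mul, conjTranspose_conjTranspose]
    have e1 : Pᴴ * U * 1 * (Uᴴ * P) = H := by
      rw [Matrix.mul_one, Matrix.mul_assoc, ← Matrix.mul_assoc U, hUU, Matrix.one_mul, hHP]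
    have e2 : Pᴴ * U * Matrix.diagonal (RCLike.ofReal ∘ hK'h.eigenvalues : Fin n → ℂ) * (Uᴴ * P)
        = K := by
      refine Eq.trans ?_ ((congrArg (fun Z => Pᴴ * Z * P) hsp.symm).trans hKK.symm)
      simp only [Matrix.mul_assoc, star_eq_conjTranspose]
    rw [Matrix.mul_add, Matrix.add_mul, e1, Matrix.mul_smul, Matrix.smul_mul, e2]
    exact hMHK

lemma IsSectorial.exists_canonical (hn : 1 ≤ n) {A : Matrix (Fin n) (Fin n) ℂ}
    (hA : IsSectorial A) : ∃ φ, IsCanonicalPhases A φ := by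
  obtain ⟨c, hc⟩ := hA.exists_rotation
  have hc0 : c ≠ 0 := by
    rintro rfl
    have : (fun _ => 1 : Fin n → ℂ) ≠ 0 := by
      intro h
      have := congrFun h ⟨0, hn⟩
      simp at this
    simpa using hc _ this
  obtain ⟨S, l, hS, h⟩ := exists_simdiag (c • A) (by
    intro x hx
    have : qf (c • A) x = c * qf A x := by
      simp [qf, smul_mulVec]
    rw [this]
    exact hc x hx)
  set v : Fin n → ℂ := fun k => 1 + Complex.I * (l k : ℂ) with hv
  have hvre : ∀ k, (v k).re = 1 := fun k => by simp [hv]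
  have hv0 : ∀ k, v k ≠ 0 := fun k h0 => by
    have := hvre k
    rw [h0] at this
    simp at this
  have harg : ∀ k, |(v k).arg| < Real.pi / 2 := fun k => by
    rw [Complex.abs_arg_lt_pi_div_two_iff]
    left; rw [hvre]; exact one_pos
  refine exists_canonical_of_diag hn A S hS (fun k => ‖v k‖ / ‖c‖) (fun k => (v k).arg - c.arg)
    (fun k => div_pos (norm_pos_iff.mpr (hv0 k)) (norm_pos_iff.mpr hc0)) ?_ ?_
  · intro i j
    have h1 := abs_lt.mp (harg i)
    have h2 := abs_lt.mp (harg j)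
    linarith
  · have hd : (Matrix.diagonal (fun k => (((‖v k‖ / ‖c‖ : ℝ)) : ℂ) *
        Complex.exp (Complex.I * (((v k).arg - c.arg : ℝ) : ℂ)))) = c⁻¹ • Matrix.diagonal v := by
      rw [← Matrix.diagonal_smul]
      congr 1
      ext k
      have e1 := Complex.norm_mul_exp_arg_mul_I (v k)
      have e2 := Complex.norm_mul_exp_arg_mul_I c
      simp only [Pi.smul_apply, smul_eq_mul]
      rw [← div_eq_inv_mul]
      conv_rhs => rw [← e1, ← e2]
      push_cast
      rw [mul_sub, Complex.exp_sub, mul_comm Complex.I, mul_comm Complex.I, div_mul_div_comm]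
    rw [hd, Matrix.mul_smul, Matrix.smul_mul, ← h, smul_smul, inv_mul_cancel₀ hc0, one_smul]

lemma IsSectorial.phases_spec (hn : 1 ≤ n) {A : Matrix (Fin n) (Fin n) ℂ}
    (hA : IsSectorial A) : IsCanonicalPhases A (phases A) := by
  have h := hA.exists_canonical hn
  rw [phases, dif_pos h]
  exact h.choose_spec

lemma qf_decomp {A T : Matrix (Fin n) (Fin n) ℂ} {φ : Fin n → ℝ} (h : A = Tᴴ * phaseDiag φ * T)
    (x : Fin n → ℂ) (ψ : ℝ) :
    (Complex.exp (-(Complex.I * (ψ : ℂ))) * qf A x).im =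
      ∑ k, Real.sin (φ k - ψ) * ‖T.mulVec x k‖ ^ 2 := by
  have h1 : qf A x = star (T.mulVec x) ⬝ᵥ (phaseDiag φ).mulVec (T.mulVec x) := by
    rw [qf, h, star_mulVec, ← dotProduct_mulVec, mulVec_mulVec, mulVec_mulVec, Matrix.mul_assoc]
  rw [h1, phaseDiag, dotProduct, Finset.mul_sum, Complex.im_sum]
  apply Finset.sum_congr rfl
  intro k _
  rw [mulVec_diagonal, Pi.star_apply]
  set y := T.mulVec x k
  have e : Complex.exp (-(Complex.I * (ψ : ℂ))) * (star y * (Complex.exp (Complex.I * (φ k : ℂ)) * y))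
      = Complex.exp (((φ k - ψ : ℝ) : ℂ) * Complex.I) * ((‖y‖ ^ 2 : ℝ) : ℂ) := by
    have : Complex.exp (((φ k - ψ : ℝ) : ℂ) * Complex.I) =
        Complex.exp (-(Complex.I * (ψ : ℂ))) * Complex.exp (Complex.I * (φ k : ℂ)) := by
      rw [← Complex.exp_add]; congr 1; push_cast; ring
    rw [this]
    push_cast
    rw [← Complex.conj_mul', RCLike.star_def]
    ring
  rw [e, Complex.im_mul_ofReal, Complex.exp_ofReal_mul_I_im]

lemma phase_interlace (hn : 1 ≤ n) (A : Matrix (Fin n) (Fin n) ℂ) (hA : PositiveImaginary A)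
    (r : ℕ)
    (E : Matrix (Fin n) (Fin n) ℂ) (hE : IsSectorial E) (hpr : prank E ≤ r)
    (hEA : PositiveImaginary (E⁻¹ * A * E⁻¹)) (k : Fin n) (k' : Fin n)
    (hk : (k' : ℕ) = k + r) : phases A k' ≤ phases (E⁻¹ * A * E⁻¹) k := by
  by_contra! hlt
  set B := E⁻¹ * A * E⁻¹ with hB
  obtain ⟨hAa, -, -, -, TA, hTA, hAd⟩ := hA.1.phases_spec hn
  obtain ⟨hBa, -, -, -, TB, hTB, hBd⟩ := hEA.1.phases_spec hn
  obtain ⟨-, -, -, -, TE, hTE, hEd⟩ := hE.phases_spec hn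
  have hEunit : IsUnit E := by
    rw [hEd]
    refine (hTE.star.mul ?_).mul hTE
    rw [phaseDiag, Matrix.isUnit_diagonal, Pi.isUnit_iff]
    intro i
    rw [isUnit_iff_ne_zero]
    exact Complex.exp_ne_zero _
  have hEdet := (Matrix.isUnit_iff_isUnit_det E).mp hEunit
  let F1 : (Fin n → ℂ) →ₗ[ℂ] ({j : Fin n // k' < j} → ℂ) :=
    (LinearMap.funLeft ℂ ℂ Subtype.val).comp TA.mulVecLin
  let F2 : (Fin n → ℂ) →ₗ[ℂ] ({j : Fin n // phases E j ≠ 0} → ℂ) :=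
    (LinearMap.funLeft ℂ ℂ Subtype.val).comp TE.mulVecLin
  let F3 : (Fin n → ℂ) →ₗ[ℂ] ({j : Fin n // j < k} → ℂ) :=
    (LinearMap.funLeft ℂ ℂ Subtype.val).comp (TB * E).mulVecLin
  have hker : LinearMap.ker (F1.prod (F2.prod F3)) ≠ ⊥ := by
    apply LinearMap.ker_ne_bot_of_finrank_lt
    rw [Module.finrank_prod, Module.finrank_prod, Module.finrank_fintype_fun_eq_card,
      Module.finrank_fintype_fun_eq_card, Module.finrank_fintype_fun_eq_card,
      Module.finrank_fintype_fun_eq_card]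
    have c1 : Fintype.card {j : Fin n // k' < j} = n - 1 - k' := by
      rw [Fintype.card_subtype]
      have : (Finset.univ.filter fun j => k' < j) = Finset.Ioi k' := by ext; simp
      rw [this, Fin.card_Ioi]
    have c2 : Fintype.card {j : Fin n // phases E j ≠ 0} ≤ r := by
      rw [prank, Set.ncard_eq_toFinset_card'] at hpr
      rw [Fintype.card_subtype]
      simpa using hpr
    have c3 : Fintype.card {j : Fin n // j < k} = k := by
      rw [Fintype.card_subtype]
      have : (Finset.univ.filter fun j => j < k) = Finset.Iio k := by ext; simp
      rw [this, Fin.card_Iio]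
    rw [c1, c3, Fintype.card_fin]
    have := k'.2
    omega
  obtain ⟨x, hx, hx0⟩ := (Submodule.ne_bot_iff _).mp hker
  rw [LinearMap.mem_ker] at hx
  have hx1 : F1 x = 0 := congrArg Prod.fst hx
  have hx2 : F2 x = 0 := congrArg (fun p => p.2.1) hx
  have hx3 : F3 x = 0 := congrArg (fun p => p.2.2) hx
  have h1 : ∀ j, k' < j → TA.mulVec x j = 0 := fun j hj => congrFun hx1 ⟨j, hj⟩
  have h2 : ∀ j, phases E j ≠ 0 → TE.mulVec x j = 0 := fun j hj => congrFun hx2 ⟨j, hj⟩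
  have h3 : ∀ j, j < k → TB.mulVec (E.mulVec x) j = 0 := fun j hj => by
    rw [mulVec_mulVec]; exact congrFun hx3 ⟨j, hj⟩
  have hEx : E.mulVec x = Eᴴ.mulVec x := by
    have e1 : (phaseDiag (phases E)).mulVec (TE.mulVec x) = TE.mulVec x := by
      ext j
      rw [phaseDiag, mulVec_diagonal]
      by_cases hj : phases E j = 0
      · simp [hj]
      · simp [h2 j hj]
    have e2 : (phaseDiag (phases E))ᴴ.mulVec (TE.mulVec x) = TE.mulVec x := by
      ext j
      rw [phaseDiag, diagonal_conjTranspose, mulVec_diagonal]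
      by_cases hj : phases E j = 0
      · simp [hj]
      · simp [h2 j hj]
    rw [hEd, conjTranspose_mul, conjTranspose_mul, conjTranspose_conjTranspose, ← mulVec_mulVec,
      ← mulVec_mulVec, e1, ← mulVec_mulVec, ← mulVec_mulVec, e2]
  have hq : qf B (E.mulVec x) = qf A x := by
    have e1 : B.mulVec (E.mulVec x) = E⁻¹.mulVec (A.mulVec x) := by
      rw [hB, mulVec_mulVec, Matrix.mul_assoc, Matrix.nonsing_inv_mul _ hEdet, Matrix.mul_one,
        mulVec_mulVec]
    rw [qf, e1, hEx, star_mulVec, conjTranspose_conjTranspose, ← dotProduct_mulVec, mulVec_mulVec,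
      Matrix.mul_nonsing_inv _ hEdet, one_mulVec, qf]
  have sA := qf_decomp hAd x (phases B k)
  have sB := qf_decomp hBd (E.mulVec x) (phases B k)
  rw [hq, sA] at sB
  have hBk := hEA.2 k
  have hle : ∑ j, Real.sin (phases B j - phases B k) * ‖TB.mulVec (E.mulVec x) j‖ ^ 2 ≤ 0 := by
    apply Finset.sum_nonpos
    intro j _
    by_cases hj : j < k
    · simp [h3 j hj]
    · apply mul_nonpos_of_nonpos_of_nonneg _ (by positivity)
      have hb := hEA.2 j
      have := hBa (not_lt.mp hj)
      apply Real.sin_nonpos_of_nonpos_of_neg_pi_le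
      · linarith
      · linarith [hb.1, hBk.2]
  have hsin : ∀ j, j ≤ k' → 0 < Real.sin (phases A j - phases B k) := by
    intro j hj
    have ha := hA.2 j
    have := hAa hj
    apply Real.sin_pos_of_pos_of_lt_pi
    · linarith
    · linarith [ha.2, hBk.1]
  have hTx : TA.mulVec x ≠ 0 := by
    intro h0
    apply hx0
    have := (Matrix.mulVec_injective_iff_isUnit.mpr hTA)
    exact this (by rw [h0, mulVec_zero])
  obtain ⟨i, hi⟩ := Function.ne_iff.mp hTx
  have hpos : 0 < ∑ j, Real.sin (phases A j - phases B k) * ‖TA.mulVec x j‖ ^ 2 := by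
    apply Finset.sum_pos'
    · intro j _
      by_cases hj : k' < j
      · simp [h1 j hj]
      · exact mul_nonneg (hsin j (not_lt.mp hj)).le (by positivity)
    · refine ⟨i, Finset.mem_univ _, ?_⟩
      have hik : i ≤ k' := by
        by_contra! h
        exact hi (h1 i h)
      have : 0 < ‖TA.mulVec x i‖ := norm_pos_iff.mpr hi
      exact mul_pos (hsin i hik) (by positivity)
  linarith

/-- lower bound on the sum of the `m` largest phases of `E⁻¹AE⁻¹`. -/
theorem sum_largest_phases_lower_bound
    (hn : 1 ≤ n) (A : Matrix (Fin n) (Fin n) ℂ) (hA : PositiveImaginary A)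
    (r : ℕ) (hr : r ≤ n)
    (E : Matrix (Fin n) (Fin n) ℂ) (hE : IsSectorial E) (hpr : prank E ≤ r)
    (hEA : PositiveImaginary (E⁻¹ * A * E⁻¹)) :
    ∀ m : ℕ, 1 ≤ m → m ≤ n →
      (∑ k ∈ Finset.univ.filter (fun k : Fin n => r ≤ (k : ℕ) ∧ (k : ℕ) < r + m), phases A k) ≤
        ∑ k ∈ Finset.univ.filter (fun k : Fin n => (k : ℕ) < m), phases (E⁻¹ * A * E⁻¹) k := by
  intro m hm1 hmn
  have hle : ∀ k' : Fin n, ∀ h : r ≤ (k' : ℕ),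
      phases A k' ≤ phases (E⁻¹ * A * E⁻¹) ⟨(k' : ℕ) - r, by omega⟩ := by
    intro k' h
    exact phase_interlace hn A hA r E hE hpr hEA _ k' (by simp only []; omega)
  let g : Fin n → Fin n := fun k => ⟨(k : ℕ) - r, by omega⟩
  calc _ ≤ ∑ k ∈ Finset.univ.filter (fun k : Fin n => r ≤ (k : ℕ) ∧ (k : ℕ) < r + m),
        phases (E⁻¹ * A * E⁻¹) (g k) := by
        apply Finset.sum_le_sum
        intro k hk
        exact hle k (Finset.mem_filter.mp hk).2.1
    _ = ∑ k ∈ (Finset.univ.filter (fun k : Fin n => r ≤ (k : ℕ) ∧ (k : ℕ) < r + m)).image g,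
        phases (E⁻¹ * A * E⁻¹) k := by
        rw [Finset.sum_image]
        intro a ha b hb hab
        simp only [Finset.coe_filter, Finset.mem_univ, true_and, Set.mem_ofPred_eq] at ha hb
        have := congrArg Fin.val hab
        simp only [g] at this
        ext
        omega
    _ ≤ _ := by
        apply Finset.sum_le_sum_of_subset_of_nonneg
        · intro j hj
          obtain ⟨k, hk, rfl⟩ := Finset.mem_image.mp hj
          have := (Finset.mem_filter.mp hk).2
          simp only [Finset.mem_filter, Finset.mem_univ, true_and, g]
          omega
        · intro j _ _
          exact (hEA.2 j).1

end LowPrank
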